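/- arXiv:1209.3843 — 2 statements merged into one kernel-verified Lean document; each statement's English description precedes it below -/
import Mathlib

section
/- If the list (γ_1,…,γ_n) of reals is weakly N-dependent, i.e. there exist integers α_1,…,α_n, not all zero, with |α_i| ≤ N+1 for all i and |α_i| = N+1 for at most one index i, such that α_1γ_1 + ⋯ + α_nγ_n = 0, then there exists a nonzero vector v ∈ L(K;(γ_1,…,γ_n)) with ‖v‖² < (n² + n)N² + (2n + 2)N + 2. -/
/-- Membership in the lattice `L(K; (γ_1, …, γ_n)) ⊆ ℤ^{n+1}`: the vectors
`(a_1, …, a_n, K(a_1 γ_1' + ⋯ + a_n γ_n'))` with `a_i ∈ ℤ`, where `γ_i' = ⌊K γ_i⌋ / K`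
(so the last coordinate is `∑ i, a_i ⌊K γ_i⌋`). -/
def inLattice (K : ℕ) {n : ℕ} (γ : Fin n → ℝ) (v : Fin (n + 1) → ℤ) : Prop :=
  ∃ a : Fin n → ℤ, (∀ i : Fin n, v i.castSucc = a i) ∧
    v (Fin.last n) = ∑ i, a i * ⌊(K : ℝ) * γ i⌋

/-- If `(γ_1, …, γ_n)` is weakly `N`-dependent, then `L(K; (γ_1, …, γ_n))` contains a
nonzero vector `v` with `‖v‖² < (n² + n)N² + (2n + 2)N + 2`. -/
theorem weakly_dependent_short_vector
    (K N n : ℕ) (hK : 0 < K) (hN : 0 < N) (γ : Fin n → ℝ)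
    (α : Fin n → ℤ) (hα : α ≠ 0)
    (hbd : ∀ i, |α i| ≤ (N : ℤ) + 1)
    (hone : ∀ i j, |α i| = (N : ℤ) + 1 → |α j| = (N : ℤ) + 1 → i = j)
    (hrel : ∑ i, (α i : ℝ) * γ i = 0) :
    ∃ v : Fin (n + 1) → ℤ, v ≠ 0 ∧ inLattice K γ v ∧
      (∑ i, ((v i : ℝ)) ^ 2) <
        ((n : ℝ) ^ 2 + (n : ℝ)) * (N : ℝ) ^ 2 + (2 * (n : ℝ) + 2) * (N : ℝ) + 2 := by
  classical
  set ind : Fin n → ℝ := fun i => if |α i| = (N : ℤ) + 1 then 1 else 0 with hind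
  have hN0 : (0 : ℝ) < N := by exact_mod_cast hN
  have hindsum : ∑ i, ind i ≤ 1 := by
    rw [hind, Finset.sum_boole]
    have : (Finset.univ.filter (fun i => |α i| = (N : ℤ) + 1)).card ≤ 1 := by
      rw [Finset.card_le_one]
      intro i hi j hj
      exact hone i j (by simpa using hi) (by simpa using hj)
    exact_mod_cast this
  have habs : ∀ i, |(α i : ℝ)| ≤ N + ind i := by
    intro i
    simp only [hind]
    split_ifs with h
    · have : |(α i : ℝ)| = (N : ℝ) + 1 := by exact_mod_cast h
      exact this.le
    · have h1 : |α i| ≤ (N : ℤ) := by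
        have := hbd i
        omega
      have : |(α i : ℝ)| ≤ (N : ℝ) := by exact_mod_cast h1
      linarith
  have hsq : ∀ i, (α i : ℝ) ^ 2 ≤ (N : ℝ) ^ 2 + (2 * N + 1) * ind i := by
    intro i
    have h1 := habs i
    have h2 : ind i = 0 ∨ ind i = 1 := by
      simp only [hind]
      split_ifs <;> simp
    have h3 := abs_nonneg (α i : ℝ)
    rw [← sq_abs]
    rcases h2 with h | h <;> rw [h] at h1 ⊢ <;> nlinarith
  have hS1 : ∑ i, |(α i : ℝ)| ≤ n * N + 1 := by
    calc ∑ i, |(α i : ℝ)| ≤ ∑ i, ((N : ℝ) + ind i) := Finset.sum_le_sum fun i _ => habs i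
      _ = n * N + ∑ i, ind i := by simp [Finset.sum_add_distrib]
      _ ≤ _ := by linarith
  have hS2 : ∑ i, (α i : ℝ) ^ 2 ≤ n * (N : ℝ) ^ 2 + (2 * N + 1) := by
    calc ∑ i, (α i : ℝ) ^ 2 ≤ ∑ i, ((N : ℝ) ^ 2 + (2 * N + 1) * ind i) :=
          Finset.sum_le_sum fun i _ => hsq i
      _ = n * (N : ℝ) ^ 2 + (2 * N + 1) * ∑ i, ind i := by
          rw [Finset.sum_add_distrib, Finset.mul_sum]; simp
      _ ≤ _ := by nlinarith
  obtain ⟨k, hk⟩ := Function.ne_iff.mp hα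
  have hlast : |∑ i, (α i : ℝ) * (⌊(K : ℝ) * γ i⌋ : ℝ)| < n * N + 1 := by
    have e : ∑ i, (α i : ℝ) * (⌊(K : ℝ) * γ i⌋ : ℝ)
        = - ∑ i, (α i : ℝ) * Int.fract ((K : ℝ) * γ i) := by
      have : ∑ i, (α i : ℝ) * ((K : ℝ) * γ i) = 0 := by
        rw [← mul_zero (K : ℝ), ← hrel, Finset.mul_sum]
        exact Finset.sum_congr rfl fun i _ => by ring
      rw [eq_neg_iff_add_eq_zero, ← Finset.sum_add_distrib, ← this]
      refine Finset.sum_congr rfl fun i _ => ?_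
      rw [← mul_add, Int.floor_add_fract]
    rw [e, abs_neg]
    refine lt_of_le_of_lt (Finset.abs_sum_le_sum_abs _ _) (lt_of_lt_of_le ?_ hS1)
    refine Finset.sum_lt_sum (fun i _ => ?_) ⟨k, Finset.mem_univ _, ?_⟩
    · rw [abs_mul, abs_of_nonneg (Int.fract_nonneg ((K : ℝ) * γ i))]
      exact mul_le_of_le_one_right (abs_nonneg _) (Int.fract_lt_one _).le
    · rw [abs_mul, abs_of_nonneg (Int.fract_nonneg ((K : ℝ) * γ k))]
      have : 0 < |(α k : ℝ)| := abs_pos.mpr (by exact_mod_cast hk)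
      exact mul_lt_of_lt_one_right this (Int.fract_lt_one _)
  refine ⟨Fin.snoc (α := fun _ => ℤ) α (∑ i, α i * ⌊(K : ℝ) * γ i⌋), ?_, ⟨α, ?_, ?_⟩, ?_⟩
  · intro h
    have := congrFun h k.castSucc
    rw [Fin.snoc_castSucc] at this
    exact hk this
  · intro i
    rw [Fin.snoc_castSucc]
  · rw [Fin.snoc_last]
  · rw [Fin.sum_univ_castSucc]
    simp only [Fin.snoc_castSucc, Fin.snoc_last]
    push_cast
    have := sq_lt_sq' (abs_lt.mp hlast).1 (abs_lt.mp hlast).2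
    nlinarith
end

section
/- Let N_1,…,N_n be positive integers. If there exist integers α_1,…,α_n, not all zero, with |α_i| ≤ N_i + 1 for all i and |α_i| = N_i + 1 for at most one index i, such that α_1γ_1 + ⋯ + α_nγ_n = 0, then there exists a nonzero vector v ∈ L(K;(γ_1,…,γ_n)) with ‖v‖² < 2·max_i N_i + 1 + (1 + Σ_{i=1}^n N_i)² + Σ_{i=1}^n N_i². -/
/-- Variable-weight version: if there are integers `α_i`, not all zero, with
`|α_i| ≤ N_i + 1` and `|α_i| = N_i + 1` for at most one `i`, such that
`∑ α_i γ_i = 0`, then `L(K; (γ_1, …, γ_n))` contains a nonzero vector `v` with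
`‖v‖² < 2 max_i N_i + 1 + (1 + ∑ N_i)² + ∑ N_i²`. -/
theorem weakly_dependent_short_vector_varying
    (K n : ℕ) (hK : 0 < K) (γ : Fin n → ℝ)
    (N : Fin n → ℕ) (hN : ∀ i, 0 < N i)
    (α : Fin n → ℤ) (hα : α ≠ 0)
    (hbd : ∀ i, |α i| ≤ (N i : ℤ) + 1)
    (hone : ∀ i j, |α i| = (N i : ℤ) + 1 → |α j| = (N j : ℤ) + 1 → i = j)
    (hrel : ∑ i, (α i : ℝ) * γ i = 0) :
    ∃ v : Fin (n + 1) → ℤ, v ≠ 0 ∧ inLattice K γ v ∧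
      (∑ i, ((v i : ℝ)) ^ 2) <
        2 * ((Finset.univ.sup N : ℕ) : ℝ) + 1 + (1 + ∑ i, (N i : ℝ)) ^ 2 +
          ∑ i, (N i : ℝ) ^ 2 := by
  obtain ⟨k, hk⟩ := Function.ne_iff.mp hα
  have hk' : α k ≠ 0 := hk
  obtain ⟨i0, hi0⟩ : ∃ i0, ∀ i, i ≠ i0 → |α i| ≤ (N i : ℤ) := by
    by_cases h : ∃ j, |α j| = (N j : ℤ) + 1
    · obtain ⟨j, hj⟩ := h
      refine ⟨j, fun i hi => ?_⟩
      have h1 := hbd i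
      have h2 : |α i| ≠ (N i : ℤ) + 1 := fun h => hi (hone i j h hj)
      omega
    · push Not at h
      refine ⟨k, fun i _ => ?_⟩
      have h1 := hbd i
      have h2 := h i
      omega
  have hbR : ∀ i, |(α i : ℝ)| ≤ (N i : ℝ) + 1 := fun i => by exact_mod_cast hbd i
  have hbR' : ∀ i, i ≠ i0 → |(α i : ℝ)| ≤ (N i : ℝ) := fun i hi => by
    exact_mod_cast hi0 i hi
  have hS1 : ∑ i, |(α i : ℝ)| ≤ 1 + ∑ i, (N i : ℝ) := by
    have : ∑ i, |(α i : ℝ)| ≤ ∑ i, ((if i = i0 then (1 : ℝ) else 0) + (N i : ℝ)) := by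
      refine Finset.sum_le_sum fun i _ => ?_
      split_ifs with h
      · linarith [hbR i]
      · linarith [hbR' i h]
    simpa [Finset.sum_add_distrib] using this
  have hS2 : ∑ i, (α i : ℝ) ^ 2 ≤
      2 * ((Finset.univ.sup N : ℕ) : ℝ) + 1 + ∑ i, (N i : ℝ) ^ 2 := by
    have : ∑ i, (α i : ℝ) ^ 2 ≤ ∑ i, ((if i = i0 then
        (2 * ((Finset.univ.sup N : ℕ) : ℝ) + 1) else 0) + (N i : ℝ) ^ 2) := by
      refine Finset.sum_le_sum fun i _ => ?_
      rw [← sq_abs]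
      have h0 := abs_nonneg (α i : ℝ)
      split_ifs with h
      · have hs : (N i : ℝ) ≤ ((Finset.univ.sup N : ℕ) : ℝ) := by
          exact_mod_cast Finset.le_sup (f := N) (Finset.mem_univ i)
        have h1 := pow_le_pow_left₀ h0 (hbR i) 2
        nlinarith
      · have h1 := pow_le_pow_left₀ h0 (hbR' i h) 2
        linarith
    simpa [Finset.sum_add_distrib] using this
  have hlast : ((∑ i, α i * ⌊(K : ℝ) * γ i⌋ : ℤ) : ℝ)
      = - ∑ i, (α i : ℝ) * Int.fract ((K : ℝ) * γ i) := by
    have h1 : ∑ i, (α i : ℝ) * ((K : ℝ) * γ i) = 0 := by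
      have : ∑ i, (α i : ℝ) * ((K : ℝ) * γ i) = K * ∑ i, (α i : ℝ) * γ i := by
        rw [Finset.mul_sum]
        exact Finset.sum_congr rfl fun i _ => by ring
      rw [this, hrel, mul_zero]
    have h2 : ∑ i, (α i : ℝ) * Int.fract ((K : ℝ) * γ i)
        = ∑ i, (α i : ℝ) * ((K : ℝ) * γ i) - ∑ i, (α i : ℝ) * (⌊(K : ℝ) * γ i⌋ : ℝ) := by
      rw [← Finset.sum_sub_distrib]
      exact Finset.sum_congr rfl fun i _ => by rw [Int.fract]; ring
    rw [h2, h1]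
    push_cast
    ring
  have hlt : |((∑ i, α i * ⌊(K : ℝ) * γ i⌋ : ℤ) : ℝ)| < 1 + ∑ i, (N i : ℝ) := by
    rw [hlast, abs_neg]
    refine lt_of_lt_of_le (lt_of_le_of_lt (Finset.abs_sum_le_sum_abs _ _) ?_) hS1
    refine Finset.sum_lt_sum (fun i _ => ?_) ⟨k, Finset.mem_univ k, ?_⟩
    · rw [abs_mul, Int.abs_fract]
      exact mul_le_of_le_one_right (abs_nonneg _) (Int.fract_lt_one _).le
    · rw [abs_mul, Int.abs_fract]
      have : 0 < |(α k : ℝ)| := abs_pos.mpr (by exact_mod_cast hk')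
      exact mul_lt_of_lt_one_right this (Int.fract_lt_one _)
  refine ⟨Fin.snoc (α := fun _ => ℤ) α (∑ i, α i * ⌊(K : ℝ) * γ i⌋), ?_, ⟨α, ?_, ?_⟩, ?_⟩
  · intro h
    have := congrFun h k.castSucc
    rw [Fin.snoc_castSucc] at this
    exact hk' this
  · intro i
    rw [Fin.snoc_castSucc]
  · rw [Fin.snoc_last]
  · rw [Fin.sum_univ_castSucc]
    simp only [Fin.snoc_castSucc, Fin.snoc_last]
    have h3 := pow_lt_pow_left₀ hlt (abs_nonneg _) two_ne_zero
    rw [sq_abs] at h3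
    linarith
end
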